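/- Let E be a homogeneous effect algebra. Assume there is an element a ∈ E with a ≤ a' such that E is isomorphic (as an effect algebra) to the interval effect algebra [0, a]_E. Then E satisfies the Riesz decomposition property. -/

import Mathlib

/-- An effect algebra: a partial commutative, associative operation `oplus`
(with definedness encoded via `Option`), constants `zero` and `one`,
unique orthosupplements, and `a ⊕ 1` defined only for `a = 0`. -/
structure EffectAlgebra (E : Type*) where
  oplus : E → E → Option E
  zero : E
  one : E
  comm : ∀ a b, oplus a b = oplus b a
  assoc : ∀ a b c ab abc, oplus a b = some ab → oplus ab c = some abc →
    ∃ bc, oplus b c = some bc ∧ oplus a bc = some abc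
  compl_exists : ∀ a, ∃ b, oplus a b = some one
  compl_unique : ∀ a b c, oplus a b = some one → oplus a c = some one → b = c
  add_one : ∀ a b, oplus a one = some b → a = zero

namespace EffectAlgebra

variable {E : Type*} (A : EffectAlgebra E)

/-- `a ⊥ b` : the sum `a ⊕ b` is defined. -/
def Perp (a b : E) : Prop := (A.oplus a b).isSome

/-- `a ≤ b` iff `b = a ⊕ c` for some `c`. -/
def le (a b : E) : Prop := ∃ c, A.oplus a c = some b

/-- The orthosupplement `a'`: the unique `b` with `a ⊕ b = 1`. -/
noncomputable def compl (a : E) : E :=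
  @Classical.epsilon E ⟨A.zero⟩ fun b => A.oplus a b = some A.one

/-- `a ⊖ b` : the unique `c` with `b ⊕ c = a` (defined when `b ≤ a`). -/
noncomputable def ominus (a b : E) : E :=
  @Classical.epsilon E ⟨A.zero⟩ fun c => A.oplus b c = some a

/-- Homogeneity. -/
def Homogeneous : Prop :=
  ∀ u v₁ v₂ s, A.oplus v₁ v₂ = some s → A.le u s → A.le u (A.compl s) →
    ∃ u₁ u₂, A.le u₁ v₁ ∧ A.le u₂ v₂ ∧ A.oplus u₁ u₂ = some u

/-- Riesz decomposition property. -/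
def RDP : Prop :=
  ∀ u v₁ v₂ s, A.oplus v₁ v₂ = some s → A.le u s →
    ∃ u₁ u₂, A.le u₁ v₁ ∧ A.le u₂ v₂ ∧ A.oplus u₁ u₂ = some u

/-- The sum `c₁ ⊕ … ⊕ cₙ` of a finite family (a list); `some s` iff the family
is orthogonal with sum `s`. -/
def sumList : List E → Option E
  | [] => some A.zero
  | x :: xs => (sumList xs).bind fun s => A.oplus x s

/-- The subfamily of `C` indexed by a set of indices `S ⊆ {1,…,n}`. -/
def pickList (C : List E) (S : Finset (Fin C.length)) : List E :=
  (S.sort (· ≤ ·)).map C.get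

/-- `C` is an orthogonal cover of `M`. -/
def IsCoverOf (C : List E) (M : Set E) : Prop :=
  (A.sumList C).isSome ∧
    ∀ a ∈ M, ∃ S : Finset (Fin C.length), A.sumList (pickList C S) = some a

/-- `M` is compatible with covers in `X`: every finite subset of `M` has an
orthogonal cover with range contained in `X`. -/
def CompatWithCoversIn (M X : Set E) : Prop :=
  ∀ F : Finset E, ↑F ⊆ M →
    ∃ C : List E, (∀ c ∈ C, c ∈ X) ∧ A.IsCoverOf C ↑F

/-- `M` is compatible (with covers in `E`). -/
def Compatible (M : Set E) : Prop := A.CompatWithCoversIn M Set.univ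

/-- `M` is internally compatible. -/
def InternallyCompatible (M : Set E) : Prop := A.CompatWithCoversIn M M

/-- `D` is a refinement of `C`: a partition `{P i}` of the index set of `D`
with `C i = ⊕_{j ∈ P i} D j`. -/
def IsRefinement (D C : List E) : Prop :=
  ∃ P : Fin C.length → Finset (Fin D.length),
    (∀ i j, i ≠ j → Disjoint (P i) (P j)) ∧
    (∀ k, ∃ i, k ∈ P i) ∧
    (∀ i, A.sumList (pickList D (P i)) = some (C.get i))

/-- One step of the closure construction `M ↦ M₁`. -/
def closureStep (M : Set E) : Set E :=
  {x | ∃ y ∈ M, A.le x y ∧ A.le x (A.compl y)} ∪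
  {z | ∃ y ∈ M, ∃ x, A.le x y ∧ A.le x (A.compl y) ∧ A.oplus x z = some y}

/-- The sets `Mₙ`. -/
def closureSeq (M : Set E) (n : ℕ) : Set E := (A.closureStep)^[n] M

/-- The closure `M̄ = ⋃ₙ Mₙ`. -/
def closure (M : Set E) : Set E := ⋃ n, A.closureSeq M n

/-- `B` is a sub-effect algebra of `E`. -/
def IsSubEA (B : Set E) : Prop :=
  A.one ∈ B ∧ ∀ a ∈ B, ∀ b ∈ B, A.le b a → A.ominus a b ∈ B

/-- The Riesz decomposition property for (the effect algebra on) a subset `B`. -/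
def RDPOn (B : Set E) : Prop :=
  ∀ u v₁ v₂ s, u ∈ B → v₁ ∈ B → v₂ ∈ B → A.oplus v₁ v₂ = some s → A.le u s →
    ∃ u₁ u₂, u₁ ∈ B ∧ u₂ ∈ B ∧ A.le u₁ v₁ ∧ A.le u₂ v₂ ∧ A.oplus u₁ u₂ = some u

/-- Homogeneity for (the effect algebra on) a subset `B`. -/
def HomogeneousOn (B : Set E) : Prop :=
  ∀ u v₁ v₂ s, u ∈ B → v₁ ∈ B → v₂ ∈ B → A.oplus v₁ v₂ = some s →
    A.le u s → A.le u (A.compl s) →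
    ∃ u₁ u₂, u₁ ∈ B ∧ u₂ ∈ B ∧ A.le u₁ v₁ ∧ A.le u₂ v₂ ∧ A.oplus u₁ u₂ = some u

/-- A block: a maximal sub-effect algebra satisfying the Riesz decomposition
property. -/
def IsBlock (B : Set E) : Prop :=
  A.IsSubEA B ∧ A.RDPOn B ∧
    ∀ B', A.IsSubEA B' → A.RDPOn B' → B ⊆ B' → B' = B

/-- A block of the sub-effect algebra on `F`: a maximal sub-effect algebra of
`F` satisfying the Riesz decomposition property. -/
def IsBlockIn (F B : Set E) : Prop :=
  B ⊆ F ∧ A.IsSubEA B ∧ A.RDPOn B ∧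
    ∀ B', B' ⊆ F → A.IsSubEA B' → A.RDPOn B' → B ⊆ B' → B' = B

/-- `a` is sharp: the infimum `a ∧ a'` exists and equals `0`, i.e. every common
lower bound of `a` and `a'` is `0`. -/
def Sharp (a : E) : Prop :=
  ∀ b, A.le b a → A.le b (A.compl a) → b = A.zero

/-- `a` is sharp in the sub-effect algebra on `F`. -/
def SharpIn (F : Set E) (a : E) : Prop :=
  a ∈ F ∧ ∀ b ∈ F, A.le b a → A.le b (A.compl a) → b = A.zero

/-- `a` is principal. -/
def Principal (a : E) : Prop :=
  ∀ x y s, A.le x a → A.le y a → A.oplus x y = some s → A.le s a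

/-- `a` is principal in the sub-effect algebra on `B`. -/
def PrincipalIn (B : Set E) (a : E) : Prop :=
  a ∈ B ∧ ∀ x ∈ B, ∀ y ∈ B, ∀ s, A.le x a → A.le y a →
    A.oplus x y = some s → A.le s a

/-- `a` is central: principal, and every `b` has a unique decomposition
`b = b₁ ⊕ b₂` with `b₁ ≤ a`, `b₂ ≤ a'`. -/
def Central (a : E) : Prop :=
  A.Principal a ∧ ∀ b, ∃! p : E × E,
    A.le p.1 a ∧ A.le p.2 (A.compl a) ∧ A.oplus p.1 p.2 = some b

/-- `a` is central in the sub-effect algebra on `B`. -/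
def CentralIn (B : Set E) (a : E) : Prop :=
  A.PrincipalIn B a ∧ ∀ b ∈ B, ∃! p : E × E,
    p.1 ∈ B ∧ p.2 ∈ B ∧ A.le p.1 a ∧ A.le p.2 (A.compl a) ∧
      A.oplus p.1 p.2 = some b

/-- The center `C(E)`. -/
def center : Set E := {a | A.Central a}

/-- The compatibility center `K(E)`: the intersection of all blocks. -/
def compatCenter : Set E := {x | ∀ B, A.IsBlock B → x ∈ B}

end EffectAlgebra

namespace EffectAlgebra

variable {E F : Type*}

section Order

variable {A : EffectAlgebra E} {a b c s : E}

theorem oplus_compl (A : EffectAlgebra E) (a : E) : A.oplus a (A.compl a) = some A.one :=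
  Classical.epsilon_spec (p := fun b => A.oplus a b = some A.one) (A.compl_exists a)

theorem oplus_zero (A : EffectAlgebra E) (a : E) : A.oplus a A.zero = some a := by
  have compl_one : A.compl A.one = A.zero :=
    A.add_one _ _ ((A.comm _ _).trans (A.oplus_compl A.one))
  have one_oplus_zero : A.oplus A.one A.zero = some A.one := compl_one ▸ A.oplus_compl A.one
  have compl_oplus : A.oplus (A.compl a) a = some A.one := (A.comm _ _).trans (A.oplus_compl a)
  obtain ⟨t, hat, hcompl⟩ := A.assoc _ _ _ _ _ compl_oplus one_oplus_zero
  rwa [A.compl_unique _ _ _ hcompl compl_oplus] at hat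

theorem oplus_left_cancel (hb : A.oplus a b = some s) (hc : A.oplus a c = some s) : b = c := by
  obtain ⟨t, hat, hbt⟩ := A.assoc _ _ _ _ _ ((A.comm b a).trans hb) (A.oplus_compl s)
  obtain ⟨t', hat', hct⟩ := A.assoc _ _ _ _ _ ((A.comm c a).trans hc) (A.oplus_compl s)
  obtain rfl : t = t' := Option.some.inj (hat.symm.trans hat')
  exact A.compl_unique t b c ((A.comm t b).trans hbt) ((A.comm t c).trans hct)

theorem zero_le (A : EffectAlgebra E) (a : E) : A.le A.zero a :=
  ⟨a, (A.comm _ _).trans (A.oplus_zero a)⟩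

theorem le_refl (A : EffectAlgebra E) (a : E) : A.le a a :=
  ⟨A.zero, A.oplus_zero a⟩

theorem le_trans (hab : A.le a b) (hbc : A.le b c) : A.le a c := by
  obtain ⟨_, had⟩ := hab
  obtain ⟨_, hbe⟩ := hbc
  obtain ⟨f, _, haf⟩ := A.assoc _ _ _ _ _ had hbe
  exact ⟨f, haf⟩

theorem le_oplus_right (h : A.oplus a b = some s) : A.le b s :=
  ⟨a, (A.comm b a).trans h⟩

theorem exists_oplus_of_le_compl (h : A.le b (A.compl a)) : ∃ s, A.oplus a b = some s := by
  obtain ⟨c, hbc⟩ := h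
  have hcb : A.oplus c b = some (A.compl a) := (A.comm c b).trans hbc
  obtain ⟨s, hba, _⟩ := A.assoc _ _ _ _ _ hcb ((A.comm _ _).trans (A.oplus_compl a))
  exact ⟨s, (A.comm a b).trans hba⟩

theorem compl_le_compl (h : A.le a b) : A.le (A.compl b) (A.compl a) := by
  obtain ⟨c, hac⟩ := h
  obtain ⟨t, hct, hat⟩ := A.assoc _ _ _ _ _ hac (A.oplus_compl b)
  rw [← A.compl_unique _ _ _ hat (A.oplus_compl a)]
  exact le_oplus_right hct

theorem eq_zero_of_oplus_le_right (h : A.oplus a b = some s) (hs : A.le s b) : a = A.zero := by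
  obtain ⟨t, hst⟩ := exists_oplus_of_le_compl (compl_le_compl hs)
  obtain ⟨r, hbr, har⟩ := A.assoc _ _ _ _ _ h hst
  obtain rfl : r = A.one := Option.some.inj (hbr.symm.trans (A.oplus_compl b))
  exact A.add_one a t har

end Order

section Interval

variable {A : EffectAlgebra E} {a : E}

/-- The partial sum of the interval `[0, a]`: the sum in the ambient effect algebra, regarded as
undefined when it is not below `a`. -/
noncomputable def intervalOplus (A : EffectAlgebra E) (a : E) (x y : {x // A.le x a}) :
    Option {x // A.le x a} :=
  open Classical in
  (A.oplus x y).bind fun s => if hs : A.le s a then some ⟨s, hs⟩ else none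

theorem intervalOplus_eq_some_iff {x y z : {x // A.le x a}} :
    A.intervalOplus a x y = some z ↔ A.oplus x y = some z.1 := by
  rw [intervalOplus, Option.bind_eq_some_iff]
  constructor
  · rintro ⟨s, hxy, hs⟩
    split_ifs at hs
    rw [← Option.some.inj hs, hxy]
  · intro hxy
    exact ⟨z, hxy, dif_pos z.2⟩

/-- The interval effect algebra `[0, a]`, carried by the subtype of elements below `a`. -/
noncomputable def interval (A : EffectAlgebra E) (a : E) : EffectAlgebra {x // A.le x a} where
  oplus := A.intervalOplus a
  zero := ⟨A.zero, A.zero_le a⟩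
  one := ⟨a, A.le_refl a⟩
  comm x y := by rw [intervalOplus, intervalOplus, A.comm]
  assoc x y z xy xyz hxy hxyz := by
    rw [intervalOplus_eq_some_iff] at hxy hxyz
    obtain ⟨yz, hyz, hxyz'⟩ := A.assoc _ _ _ _ _ hxy hxyz
    have hyza : A.le yz a := le_trans (le_oplus_right hxyz') xyz.2
    exact ⟨⟨yz, hyza⟩, intervalOplus_eq_some_iff.2 hyz, intervalOplus_eq_some_iff.2 hxyz'⟩
  compl_exists x := by
    obtain ⟨c, hxc⟩ := x.2
    exact ⟨⟨c, le_oplus_right hxc⟩, intervalOplus_eq_some_iff.2 hxc⟩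
  compl_unique x y z hy hz := by
    rw [intervalOplus_eq_some_iff] at hy hz
    exact Subtype.ext (oplus_left_cancel hy hz)
  add_one x y hxy := by
    rw [intervalOplus_eq_some_iff] at hxy
    exact Subtype.ext (eq_zero_of_oplus_le_right hxy y.2)

theorem interval_oplus_eq_some_iff {x y z : {x // A.le x a}} :
    (A.interval a).oplus x y = some z ↔ A.oplus x y = some z.1 :=
  intervalOplus_eq_some_iff

theorem interval_le_iff {x y : {x // A.le x a}} : (A.interval a).le x y ↔ A.le x y := by
  constructor
  · rintro ⟨c, hxc⟩
    exact ⟨c, interval_oplus_eq_some_iff.1 hxc⟩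
  · rintro ⟨c, hxc⟩
    exact ⟨⟨c, le_trans (le_oplus_right hxc) y.2⟩, interval_oplus_eq_some_iff.2 hxc⟩

-- Below `a` the side condition of homogeneity is automatic: `u ≤ a ≤ a' ≤ s'`.
theorem Homogeneous.rdp_interval (hA : A.Homogeneous) (ha : A.le a (A.compl a)) :
    (A.interval a).RDP := by
  intro u v₁ v₂ s hs hus
  have hus' : A.le u (A.compl s) := le_trans u.2 (le_trans ha (compl_le_compl s.2))
  obtain ⟨u₁, u₂, hu₁, hu₂, hu⟩ :=
    hA u v₁ v₂ s (interval_oplus_eq_some_iff.1 hs) (interval_le_iff.1 hus) hus'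
  exact ⟨⟨u₁, le_trans hu₁ v₁.2⟩, ⟨u₂, le_trans hu₂ v₂.2⟩, interval_le_iff.2 hu₁,
    interval_le_iff.2 hu₂, interval_oplus_eq_some_iff.2 hu⟩

end Interval

/-- An isomorphism of effect algebras: a bijection which preserves the unit and which preserves
and reflects the relation `x ⊕ y = z`, so that it and its inverse are both morphisms. -/
structure Iso (A : EffectAlgebra E) (B : EffectAlgebra F) extends E ≃ F where
  map_one : toFun A.one = B.one
  map_oplus_iff : ∀ x y z, B.oplus (toFun x) (toFun y) = some (toFun z) ↔ A.oplus x y = some z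

namespace Iso

variable {A : EffectAlgebra E} {B : EffectAlgebra F}

theorem map_le_iff (e : A.Iso B) {x y : E} : B.le (e.toEquiv x) (e.toEquiv y) ↔ A.le x y := by
  rw [le, e.toEquiv.surjective.exists]
  exact exists_congr fun z => e.map_oplus_iff x z y

theorem rdp (e : A.Iso B) (hB : B.RDP) : A.RDP := by
  intro u v₁ v₂ s hs hus
  obtain ⟨w₁, w₂, hw₁, hw₂, hw⟩ :=
    hB _ _ _ _ ((e.map_oplus_iff v₁ v₂ s).2 hs) (e.map_le_iff.2 hus)
  obtain ⟨u₁, rfl⟩ := e.toEquiv.surjective w₁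
  obtain ⟨u₂, rfl⟩ := e.toEquiv.surjective w₂
  exact ⟨u₁, u₂, e.map_le_iff.1 hw₁, e.map_le_iff.1 hw₂, (e.map_oplus_iff u₁ u₂ u).1 hw⟩

/-- The isomorphism onto the interval `[0, a]` given by a map into the ambient effect algebra
which is a bijection onto the elements below `a` and a morphism in both directions. -/
noncomputable def ofMapToInterval {a : F} (φ : E → F)
    (hrange : ∀ x, B.le (φ x) a)
    (hinj : Function.Injective φ)
    (hsurj : ∀ y, B.le y a → ∃ x, φ x = y)
    (hone : φ A.one = a)
    (hmor : ∀ x y s, A.oplus x y = some s → B.oplus (φ x) (φ y) = some (φ s))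
    (hinv : ∀ x y t, B.oplus (φ x) (φ y) = some t → B.le t a →
      ∃ s, A.oplus x y = some s ∧ φ s = t) :
    A.Iso (B.interval a) where
  toEquiv := Equiv.ofBijective (fun x => ⟨φ x, hrange x⟩)
    ⟨fun _ _ h => hinj (congrArg Subtype.val h), fun y => by
      obtain ⟨x, hx⟩ := hsurj y y.2
      exact ⟨x, Subtype.ext hx⟩⟩
  map_one := Subtype.ext hone
  map_oplus_iff x y z := by
    refine interval_oplus_eq_some_iff.trans ⟨fun hxy => ?_, hmor x y z⟩
    obtain ⟨s, hs, hsz⟩ := hinv x y (φ z) hxy (hrange z)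
    rwa [hinj hsz] at hs

end Iso

end EffectAlgebra

theorem iso_to_interval_rdp_general {E F : Type*} {A : EffectAlgebra E} {B : EffectAlgebra F}
    (hB : B.Homogeneous) {a : F} (ha : B.le a (B.compl a)) (e : A.Iso (B.interval a)) :
    A.RDP :=
  e.rdp (hB.rdp_interval ha)

/-- If a homogeneous effect algebra `E` is isomorphic to the
interval effect algebra `[0, a]_E` for some `a ≤ a'`, then `E` satisfies the
Riesz decomposition property. Here `φ : E → [0,a]_E` is a bijective morphism
whose inverse is a morphism; in `[0,a]_E`, `x ⊕ y` is defined iff it is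
defined in `E` and `≤ a`, and `a` is the unit. -/
theorem iso_to_interval_rdp {E : Type*} (A : EffectAlgebra E)
    (hH : A.Homogeneous) (a : E) (ha : A.le a (A.compl a))
    (φ : E → E)
    (hrange : ∀ x, A.le (φ x) a)
    (hinj : Function.Injective φ)
    (hsurj : ∀ y, A.le y a → ∃ x, φ x = y)
    (hone : φ A.one = a)
    (hmor : ∀ x y s, A.oplus x y = some s →
      ∃ t, A.oplus (φ x) (φ y) = some t ∧ A.le t a ∧ φ s = t)
    (hinv : ∀ x y t, A.oplus (φ x) (φ y) = some t → A.le t a →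
      ∃ s, A.oplus x y = some s ∧ φ s = t) :
    A.RDP := by
  have hmap x y s (hxy : A.oplus x y = some s) : A.oplus (φ x) (φ y) = some (φ s) := by
    obtain ⟨_, ht, _, rfl⟩ := hmor x y s hxy; exact ht
  exact iso_to_interval_rdp_general hH ha (.ofMapToInterval φ hrange hinj hsurj hone hmap hinv)
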